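/- For every positive integer n, the partition graph G_n is connected. -/

import Mathlib

/-- One partition is obtained from another by an elementary unit transfer:
pick two (occurrences of) parts, increase one by 1 and decrease the other by 1,
deleting the latter if it becomes 0.  Since a partition is recorded as a
multiset of parts, reordering into nonincreasing form is automatic. -/
def UnitTransfer {n : ℕ} (p q : Nat.Partition n) : Prop :=
  ∃ (a b : ℕ) (rest : Multiset ℕ),
    p.parts = a ::ₘ b ::ₘ rest ∧
    q.parts = (a + 1) ::ₘ (if b = 1 then rest else (b - 1) ::ₘ rest)

/-- The partition graph `G_n`: vertices are partitions of `n`, two distinct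
partitions are adjacent when one is obtained from the other by an elementary
unit transfer. -/
def partitionGraph (n : ℕ) : SimpleGraph (Nat.Partition n) :=
  SimpleGraph.fromRel UnitTransfer

/-- Graph distance `d_S(λ) = min_{σ ∈ S} d(λ, σ)` from a vertex to a set. -/
noncomputable def dSet {n : ℕ} (S : Set (Nat.Partition n)) (l : Nat.Partition n) : ℕ :=
  sInf ((fun s => (partitionGraph n).dist l s) '' S)

theorem reach_of_transfer {n : ℕ} {p q : Nat.Partition n} (h : UnitTransfer p q) :
    (partitionGraph n).Reachable p q := by
  by_cases e : p = q
  · subst e; exact SimpleGraph.Reachable.refl _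
  · apply SimpleGraph.Adj.reachable
    exact (SimpleGraph.fromRel_adj _ _ _).2 ⟨e, Or.inl h⟩

theorem reach_merge {n : ℕ} (b : ℕ) : ∀ (a : ℕ) (rest : Multiset ℕ) (p q : Nat.Partition n),
    p.parts = a ::ₘ (b + 1) ::ₘ rest → q.parts = (a + (b + 1)) ::ₘ rest →
    (partitionGraph n).Reachable p q := by
  induction b with
  | zero =>
    intro a rest p q hp hq
    exact reach_of_transfer ⟨a, 1, rest, by simpa using hp, by simpa using hq⟩
  | succ b ih =>
    intro a rest p q hp hq
    have hpos : ∀ i ∈ (a + 1) ::ₘ (b + 1) ::ₘ rest, 0 < i := by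
      intro i hi
      simp only [Multiset.mem_cons] at hi
      rcases hi with rfl | rfl | hi
      · omega
      · omega
      · exact p.parts_pos (by rw [hp]; simp [hi])
    have hsum : ((a + 1) ::ₘ (b + 1) ::ₘ rest).sum = n := by
      have := p.parts_sum
      rw [hp] at this
      simp only [Multiset.sum_cons] at this ⊢
      omega
    let r : Nat.Partition n := ⟨(a + 1) ::ₘ (b + 1) ::ₘ rest, fun {i} hi => hpos i hi, hsum⟩
    refine (reach_of_transfer (q := r) ⟨a, b + 1 + 1, rest, hp, ?_⟩).trans
      (ih (a + 1) rest r q rfl ?_)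
    · simp [r]
    · rw [hq]; congr 1; omega

theorem reach_top {n : ℕ} (hn : 0 < n) (k : ℕ) : ∀ p : Nat.Partition n,
    p.parts.card = k → ∀ t : Nat.Partition n, t.parts = {n} →
    (partitionGraph n).Reachable p t := by
  induction k with
  | zero =>
    intro p hp
    have := p.parts_sum
    rw [Multiset.card_eq_zero.1 hp] at this
    simp at this
    omega
  | succ k ih =>
    intro p hp t ht
    obtain ⟨a, ha⟩ := Multiset.card_pos_iff_exists_mem.1 (show 0 < p.parts.card by omega)
    obtain ⟨s, hs⟩ := Multiset.exists_cons_of_mem ha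
    have hc : s.card = k := by
      rw [hs, Multiset.card_cons] at hp
      omega
    replace hs := hs.symm
    rcases s.empty_or_exists_mem with h0 | ⟨b, hb⟩
    · subst h0
      have h := p.parts_sum
      rw [← hs] at h
      have : p = t := by
        ext1
        rw [← hs, ht]
        simp at h
        simp [h]
      rw [this]
    · obtain ⟨rest, rfl⟩ := Multiset.exists_cons_of_mem hb
      have hbp : 0 < b := p.parts_pos (by rw [← hs]; simp)
      obtain ⟨c, rfl⟩ : ∃ c, b = c + 1 := ⟨b - 1, by omega⟩
      have hpos : ∀ i ∈ (a + (c + 1)) ::ₘ rest, 0 < i := by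
        intro i hi
        simp only [Multiset.mem_cons] at hi
        rcases hi with rfl | hi
        · omega
        · exact p.parts_pos (by rw [← hs]; simp [hi])
      have hsum : ((a + (c + 1)) ::ₘ rest).sum = n := by
        have := p.parts_sum
        rw [← hs] at this
        simp only [Multiset.sum_cons] at this ⊢
        omega
      let r : Nat.Partition n := ⟨(a + (c + 1)) ::ₘ rest, fun {i} hi => hpos i hi, hsum⟩
      exact (reach_merge c a rest p r hs.symm rfl).trans
        (ih r (by simpa [r] using hc) t ht)

/-- For every positive integer `n`, the partition graph `G_n` is connected. -/
theorem partitionGraph_connected (n : ℕ) (hn : 0 < n) :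
    (partitionGraph n).Connected := by
  have ht : (Nat.Partition.indiscrete n).parts = {n} :=
    Nat.Partition.indiscrete_parts hn.ne'
  have : Nonempty (Nat.Partition n) := ⟨Nat.Partition.indiscrete n⟩
  exact ⟨fun p q => (reach_top hn _ p rfl _ ht).trans (reach_top hn _ q rfl _ ht).symm⟩
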